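/- Let m be a positive integer and a, c, d complex numbers with Re(c − a) > m, such that c, c − a and d are not nonpositive integers or zero and (1+a−c)_k ≠ 0 for 1 ≤ k ≤ m. Then Σ_{k=1}^∞ (a)_k (d+m)_k / ((c)_k (d)_k k) = ψ(c) − ψ(c−a) + m! · Σ_{k=1}^m (−1)^k (a)_k / (k (m−k)! (1+a−c)_k (d)_k). -/

import Mathlib

/-- The Pochhammer symbol `(a)_k = a (a+1) ⋯ (a+k-1)`. -/
noncomputable def poch (a : ℂ) (k : ℕ) : ℂ := Polynomial.eval a (ascPochhammer ℂ k)

/-- The digamma function `ψ(z) = Γ'(z)/Γ(z)`. -/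
noncomputable def digamma (z : ℂ) : ℂ := deriv Complex.Gamma z / Complex.Gamma z
open Filter Topology Asymptotics

lemma poch_zero (a : ℂ) : poch a 0 = 1 := by simp [poch]

lemma poch_succ (a : ℂ) (n : ℕ) : poch a (n + 1) = poch a n * (a + n) := by
  simp [poch, ascPochhammer_succ_eval]

lemma poch_eq_prod (a : ℂ) (n : ℕ) : poch a n = ∏ j ∈ Finset.range n, (a + j) := by
  induction n with
  | zero => simp [poch_zero]
  | succ n ih => rw [poch_succ, ih, Finset.prod_range_succ]

lemma poch_succ_left (a : ℂ) (n : ℕ) : poch a (n + 1) = a * poch (a + 1) n := by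
  rw [poch_eq_prod, poch_eq_prod, Finset.prod_range_succ']
  rw [mul_comm]
  congr 1
  · simp
  · refine Finset.prod_congr rfl fun j _ => ?_
    push_cast; ring

lemma add_nat_ne {c : ℂ} (hc : ∀ n : ℕ, c ≠ -(n : ℂ)) (n : ℕ) : c + n ≠ 0 :=
  fun h => hc n (eq_neg_of_add_eq_zero_left h)

lemma poch_ne {c : ℂ} (hc : ∀ n : ℕ, c ≠ -(n : ℂ)) (n : ℕ) : poch c n ≠ 0 := by
  rw [poch_eq_prod]
  exact Finset.prod_ne_zero_iff.2 fun j _ => add_nat_ne hc j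

lemma succ_ne {c : ℂ} (hc : ∀ n : ℕ, c ≠ -(n : ℂ)) : ∀ n : ℕ, c + 1 ≠ -(n : ℂ) := by
  intro n h
  apply hc (n + 1)
  push_cast
  linear_combination h

/-- Vandermonde type expansion. -/
lemma vander (k : ℕ) : ∀ (m : ℕ) (d : ℂ), (∀ n : ℕ, d ≠ -(n : ℂ)) →
    poch (d + m) k / poch d k =
      ∑ j ∈ Finset.range (m + 1), (m.choose j : ℂ) * (k.descFactorial j : ℂ) / poch d j := by
  induction k with
  | zero =>
    intro m d hd
    rw [Finset.sum_range_succ']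
    simp [poch_zero]
  | succ k ih =>
    intro m d hd
    cases m with
    | zero => simp [poch_zero, div_self (poch_ne hd (k + 1))]
    | succ m =>
      have h1 := ih (m + 1) d hd
      have h2 := ih m (d + 1) (succ_ne hd)
      have key : poch (d + (m + 1 : ℕ)) (k + 1) / poch d (k + 1)
          = poch (d + (m + 1 : ℕ)) k / poch d k
            + ((m + 1 : ℕ) : ℂ) / d * (poch (d + 1 + m) k / poch (d + 1) k) := by
        have e : d + 1 + (m : ℂ) = d + (m + 1 : ℕ) := by push_cast; ring
        rw [e]
        have n1 := poch_ne hd k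
        have n2 := poch_ne (succ_ne hd) k
        have n3 := add_nat_ne hd k
        have n4 : d ≠ 0 := by simpa using hd 0
        have e2 : poch d k * (d + k) = d * poch (d + 1) k := by
          rw [← poch_succ, poch_succ_left]
        rw [poch_succ, poch_succ]
        have e3 : poch (d + 1) k = poch d k * (d + k) / d := by
          field_simp; linear_combination -e2
        rw [e3]
        field_simp
        ring
      rw [key, h1, h2, Finset.sum_range_succ', Finset.sum_range_succ' (n := m + 1), Finset.mul_sum]
      rw [add_right_comm, ← Finset.sum_add_distrib]
      congr 1
      · refine Finset.sum_congr rfl fun j _ => ?_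
        have c1 : ((m + 1 : ℕ) : ℂ) * (m.choose j : ℂ)
            = ((m + 1).choose (j + 1) : ℂ) * ((j + 1 : ℕ) : ℂ) := by
          exact_mod_cast Nat.add_one_mul_choose_eq m j
        have c2 : (((k + 1).descFactorial (j + 1) : ℕ) : ℂ)
            = (k.descFactorial (j + 1) : ℂ) + ((j + 1 : ℕ) : ℂ) * (k.descFactorial j : ℂ) := by
          rw [Nat.succ_descFactorial_succ, Nat.descFactorial_succ]
          rcases le_or_gt j k with h | h
          · push_cast [Nat.cast_sub h]; ring
          · rw [Nat.descFactorial_of_lt h]; simp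
        have n2 := poch_ne (succ_ne hd) j
        have n4 : d ≠ 0 := by simpa using hd 0
        rw [poch_succ_left, c2]
        field_simp
        linear_combination (k.descFactorial j : ℂ) * c1

/-- Growth of the ratio of Pochhammer symbols. -/
lemma ratio_isBigO (a c : ℂ) :
    (fun n : ℕ => poch a (n + 1) / poch c (n + 1)) =O[atTop]
      fun n : ℕ => (n : ℝ) ^ (-(c - a).re) := by
  have hP : ∀ (s : ℂ) (n : ℕ), n ≠ 0 →
      poch s (n + 1) = (n : ℂ) ^ s * (n.factorial : ℂ) * (Complex.GammaSeq s n)⁻¹ := by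
    intro s n hn
    have h0 : (n : ℂ) ^ s * (n.factorial : ℂ) ≠ 0 := by
      apply mul_ne_zero
      · simp [Complex.cpow_eq_zero_iff, hn]
      · exact_mod_cast n.factorial_ne_zero
    rw [Complex.GammaSeq, ← poch_eq_prod, inv_div, mul_div_cancel₀ _ h0]
  have hinv : ∃ L, Tendsto (fun n => (Complex.GammaSeq a n)⁻¹) atTop (𝓝 L) := by
    by_cases h : ∃ N : ℕ, a = -(N : ℂ)
    · obtain ⟨N, hN⟩ := h
      refine ⟨0, tendsto_const_nhds.congr' ?_⟩
      filter_upwards [eventually_ge_atTop N] with n hn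
      have : ∏ j ∈ Finset.range (n + 1), (a + j) = 0 :=
        Finset.prod_eq_zero (i := N) (by simp; omega) (by simp [hN])
      simp [Complex.GammaSeq, this]
    · push Not at h
      exact ⟨_, (Complex.GammaSeq_tendsto_Gamma a).inv₀ (Complex.Gamma_ne_zero h)⟩
  obtain ⟨L, hL⟩ := hinv
  have hlim := hL.mul (Complex.GammaSeq_tendsto_Gamma c)
  have hO := hlim.isBigO_one ℝ
  have hO2 : (fun n : ℕ => (n : ℂ) ^ (a - c)) =O[atTop] fun n : ℕ => (n : ℝ) ^ (-(c - a).re) := by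
    apply IsBigO.of_bound 1
    filter_upwards [eventually_gt_atTop 0] with n hn
    have : (0 : ℝ) < n := by exact_mod_cast hn
    rw [Complex.norm_natCast_cpow_of_pos hn, one_mul, Real.norm_of_nonneg (by positivity)]
    simp
  have := hO2.mul hO
  simp only [mul_one] at this
  refine this.congr' ?_ EventuallyEq.rfl
  filter_upwards [eventually_gt_atTop 0] with n hn
  have hn' : n ≠ 0 := by omega
  have hnc : (n : ℂ) ≠ 0 := by exact_mod_cast hn'
  rw [hP a n hn', hP c n hn', Complex.cpow_sub _ _ hnc]
  have h1 : (n.factorial : ℂ) ≠ 0 := by exact_mod_cast n.factorial_ne_zero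
  have h2 : (n : ℂ) ^ c ≠ 0 := by simp [Complex.cpow_eq_zero_iff, hn']
  rw [div_eq_mul_inv (_ * _ * _), mul_inv, inv_inv]
  field_simp

lemma desc_isBigO (j : ℕ) :
    (fun n : ℕ => (n.descFactorial j : ℂ)) =O[atTop] fun n : ℕ => (n : ℝ) ^ (j : ℝ) := by
  apply IsBigO.of_bound 1
  filter_upwards with n
  rw [Complex.norm_natCast, one_mul, Real.rpow_natCast, norm_pow, Real.norm_natCast]
  exact_mod_cast Nat.descFactorial_le_pow n j

lemma u_isBigO (a c : ℂ) (j : ℕ) :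
    (fun n : ℕ => poch a (n + 1) / poch c (n + 1) * (n.descFactorial j : ℂ)) =O[atTop]
      fun n : ℕ => (n : ℝ) ^ (-(c - a).re + j) := by
  refine ((ratio_isBigO a c).mul (desc_isBigO j)).congr' EventuallyEq.rfl ?_
  filter_upwards [eventually_gt_atTop 0] with n hn
  rw [Real.rpow_add (by exact_mod_cast hn)]

lemma u_summable (a c : ℂ) (j : ℕ) (h : (c - a).re > j + 1) :
    Summable (fun n : ℕ => poch a (n + 1) / poch c (n + 1) * (n.descFactorial j : ℂ)) :=
  summable_of_isBigO_nat (Real.summable_nat_rpow.2 (by linarith)) (u_isBigO a c j)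

lemma G_tendsto (a c : ℂ) (j : ℕ) (h : (c - a).re > j + 1) :
    Tendsto (fun n : ℕ => poch a (n + 1) / poch c (n + 1) * (n.descFactorial j : ℂ) * (c + n))
      atTop (𝓝 0) := by
  have h1 : (fun n : ℕ => c + n) =O[atTop] fun n : ℕ => (n : ℝ) ^ (1 : ℝ) := by
    apply IsBigO.of_bound (‖c‖ + 1)
    filter_upwards [eventually_ge_atTop 1] with n hn
    have hn' : (1 : ℝ) ≤ n := by exact_mod_cast hn
    rw [Real.rpow_one, Real.norm_natCast]
    calc ‖c + n‖ ≤ ‖c‖ + ‖(n : ℂ)‖ := norm_add_le _ _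
      _ = ‖c‖ + n := by rw [Complex.norm_natCast]
      _ ≤ (‖c‖ + 1) * n := by nlinarith [norm_nonneg c]
  refine ((u_isBigO a c j).mul h1).trans_tendsto ?_
  have := (tendsto_rpow_neg_atTop (y := (c - a).re - j - 1) (by linarith)).comp
    tendsto_natCast_atTop_atTop
  refine this.congr' ?_
  filter_upwards [eventually_gt_atTop 0] with n hn
  rw [← Real.rpow_add (by exact_mod_cast hn)]
  simp only [Function.comp]
  congr 1
  ring

lemma tsum_tele {f G : ℕ → ℂ} (hf : Summable f) (hG : Tendsto G atTop (𝓝 0))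
    (h : ∀ n, f n = G (n + 1) - G n) : ∑' n, f n = -G 0 := by
  refine tendsto_nhds_unique hf.hasSum.tendsto_sum_nat ?_
  simp_rw [h, Finset.sum_range_sub]
  simpa using hG.sub_const (G 0)

lemma S_eval (a c : ℂ) (hc : ∀ n : ℕ, c ≠ -(n : ℂ)) (j : ℕ) (h : (c - a).re > j + 1) :
    ∑' n : ℕ, poch a (n + 1) / poch c (n + 1) * (n.descFactorial j : ℂ)
      = (-1) ^ (j + 1) * (j.factorial : ℂ) * poch a (j + 1) / poch (1 + a - c) (j + 1) := by
  induction j with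
  | zero =>
    have n1 : 1 + a - c ≠ 0 := by
      intro h0
      have := congrArg Complex.re h0
      simp at this h
      linarith
    have key := tsum_tele ((u_summable a c 0 h).mul_left (1 + a - c)) (G_tendsto a c 0 h) (by
      intro n
      have m1 := poch_ne hc (n + 1)
      have m2 := add_nat_ne hc (n + 1)
      push_cast at m2
      rw [poch_succ a (n + 1), poch_succ c (n + 1)]
      simp only [Nat.descFactorial_zero]
      push_cast
      field_simp
      ring)
    rw [tsum_mul_left] at key
    have n2 : c ≠ 0 := by simpa using hc 0
    simp [poch_succ, poch_zero, n2] at key ⊢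
    field_simp
    linear_combination key
  | succ j ih =>
    push_cast at h
    have ih' := ih (by linarith)
    have hn : ∀ i : ℕ, i ≤ j + 1 → 1 + a - c + i ≠ 0 := by
      intro i hi h0
      have h1 := congrArg Complex.re h0
      have h2 : (i : ℝ) ≤ j + 1 := by exact_mod_cast hi
      simp at h1 h
      linarith
    have hh : (c - a).re > ((j + 1 : ℕ) : ℝ) + 1 := by push_cast; linarith
    have s1 := (u_summable a c (j + 1) hh).mul_left (1 + a - c + (j + 1))
    have s2 := (u_summable a c j (by linarith)).mul_left ((j + 1) * (a + (j + 1)))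
    have key := tsum_tele (s1.add s2) (G_tendsto a c (j + 1) hh) (by
      intro n
      have m1 := poch_ne hc (n + 1)
      have m2 := add_nat_ne hc (n + 1)
      push_cast at m2
      rw [poch_succ a (n + 1), poch_succ c (n + 1)]
      have d1 : (n.descFactorial (j + 1) : ℂ) = (n - j) * n.descFactorial j := by
        rw [Nat.descFactorial_succ]
        rcases le_or_gt j n with h | h
        · push_cast [Nat.cast_sub h]; ring
        · rw [Nat.descFactorial_of_lt h]; simp
      rw [Nat.succ_descFactorial_succ, d1]
      push_cast
      field_simp
      ring)
    rw [s1.tsum_add s2, tsum_mul_left, tsum_mul_left, ih'] at key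
    simp only [Nat.zero_descFactorial_succ, Nat.cast_zero, mul_zero, zero_mul, neg_zero] at key
    have n1 : poch (1 + a - c) (j + 1) ≠ 0 := by
      rw [poch_eq_prod]
      exact Finset.prod_ne_zero_iff.2 fun i hi => hn i (by simp at hi; omega)
    have n2 := hn (j + 1) le_rfl
    push_cast at n2
    rw [poch_succ a (j + 1), poch_succ _ (j + 1), Nat.factorial_succ]
    push_cast
    rw [eq_div_iff (mul_ne_zero n1 n2)]
    generalize ∑' n : ℕ, poch a (n + 1) / poch c (n + 1) * (n.descFactorial (j + 1) : ℂ) = T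
      at key ⊢
    field_simp at key
    linear_combination key

lemma D_summable (a c : ℂ) (h : 0 < (c - a).re) :
    Summable (fun n : ℕ => poch a (n + 1) / poch c (n + 1) / ((n + 1 : ℕ) : ℂ)) := by
  have h1 : (fun n : ℕ => (((n + 1 : ℕ) : ℂ))⁻¹) =O[atTop] fun n : ℕ => (n : ℝ) ^ (-1 : ℝ) := by
    apply IsBigO.of_bound 1
    filter_upwards [eventually_ge_atTop 1] with n hn
    have hn' : (0 : ℝ) < n := by exact_mod_cast hn
    rw [norm_inv, Complex.norm_natCast, Real.rpow_neg_one, norm_inv, Real.norm_natCast, one_mul]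
    apply inv_anti₀ hn'
    push_cast; linarith
  have h2 : (fun n : ℕ => poch a (n + 1) / poch c (n + 1) / ((n + 1 : ℕ) : ℂ)) =O[atTop]
      fun n : ℕ => (n : ℝ) ^ (-(c - a).re - 1) := by
    refine ((ratio_isBigO a c).mul h1).congr' ?_ ?_
    · exact Eventually.of_forall fun n => by simp [div_eq_mul_inv]
    · filter_upwards [eventually_gt_atTop 0] with n hn
      rw [← Real.rpow_add (by exact_mod_cast hn)]
      rfl
  exact summable_of_isBigO_nat (Real.summable_nat_rpow.2 (by linarith)) h2

/-- The base series. -/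
noncomputable def DD (a c : ℂ) : ℂ :=
  ∑' n : ℕ, poch a (n + 1) / poch c (n + 1) / ((n + 1 : ℕ) : ℂ)

lemma D_step (a c : ℂ) (hc : ∀ n : ℕ, c ≠ -(n : ℂ)) (h : 0 < (c - a).re) :
    DD a c = DD a (c + 1) + (1 / (c - a) - 1 / c) := by
  have h' : (c + 1 - a).re > ((0 : ℕ) : ℝ) + 1 := by simp at h ⊢; linarith
  have hs := S_eval a (c + 1) (succ_ne hc) 0 h'
  have n1 : c - a ≠ 0 := by
    intro h0; rw [h0] at h; simp at h
  have n2 : c ≠ 0 := by simpa using hc 0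
  have s1 := D_summable a c h
  have s2 := D_summable a (c + 1) (by simp at h ⊢; linarith)
  have e : DD a c - DD a (c + 1) = 1 / c * ∑' n : ℕ, poch a (n + 1) / poch (c + 1) (n + 1) *
      (n.descFactorial 0 : ℂ) := by
    rw [DD, DD, ← s1.tsum_sub s2, ← tsum_mul_left]
    refine tsum_congr fun n => ?_
    have m1 := poch_ne hc (n + 1)
    have m2 := add_nat_ne hc (n + 1)
    have m3 : ((n + 1 : ℕ) : ℂ) ≠ 0 := by exact_mod_cast n.succ_ne_zero
    have e2 : poch (c + 1) (n + 1) = poch c (n + 1) * (c + (n + 1 : ℕ)) / c := by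
      rw [eq_div_iff n2, mul_comm _ c, ← poch_succ_left, poch_succ]
    rw [e2]
    simp only [Nat.descFactorial_zero, Nat.cast_one, mul_one]
    field_simp
    ring
  rw [hs] at e
  simp [poch_succ, poch_zero] at e
  have n3 : 1 + a - (c + 1) ≠ 0 := by
    intro h0; apply n1; linear_combination -h0
  rw [sub_eq_iff_eq_add] at e
  rw [e, add_comm]
  congr 1
  field_simp
  ring

lemma D_iter (a c : ℂ) (hc : 0 < c.re) (h : 0 < (c - a).re) (N : ℕ) :
    DD a c = DD a (c + N) + ∑ j ∈ Finset.range N, (1 / (c - a + j) - 1 / (c + j)) := by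
  induction N with
  | zero => simp
  | succ N ih =>
    have hN : (0 : ℝ) ≤ N := N.cast_nonneg
    rw [ih, D_step a (c + N), Finset.sum_range_succ]
    · push_cast
      rw [add_assoc c, add_sub_right_comm c]
      ring
    · intro n h0
      have := congrArg Complex.re h0
      have hn : (0 : ℝ) ≤ n := n.cast_nonneg
      simp at this
      linarith
    · simp at h ⊢; linarith

lemma norm_add_nat_mono {c : ℂ} (hc : 0 < c.re) (N : ℕ) : ‖c‖ ≤ ‖c + N‖ := by
  rw [Complex.norm_def, Complex.norm_def]
  apply Real.sqrt_le_sqrt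
  have hN : (0 : ℝ) ≤ N := N.cast_nonneg
  simp [Complex.normSq_apply]
  nlinarith

lemma norm_poch_mono {c : ℂ} (hc : 0 < c.re) (N k : ℕ) : ‖poch c k‖ ≤ ‖poch (c + N) k‖ := by
  rw [poch_eq_prod, poch_eq_prod, norm_prod, norm_prod]
  refine Finset.prod_le_prod (fun _ _ => norm_nonneg _) fun j _ => ?_
  have : c + N + j = c + j + N := by ring
  rw [this]
  apply norm_add_nat_mono
  have hN : (0 : ℝ) ≤ j := j.cast_nonneg
  simp; linarith

lemma re_pos_ne {c : ℂ} (hc : 0 < c.re) : ∀ n : ℕ, c ≠ -(n : ℂ) := by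
  intro n h0
  have := congrArg Complex.re h0
  have hn : (0 : ℝ) ≤ n := n.cast_nonneg
  simp at this
  linarith

lemma D_tendsto (a c : ℂ) (hc : 0 < c.re) (h : 0 < (c - a).re) :
    Tendsto (fun N : ℕ => DD a (c + N)) atTop (𝓝 0) := by
  have hs := (D_summable a c h).norm
  have hb : ∀ N : ℕ, 0 < N → ‖DD a (c + N)‖ ≤ (‖c‖ *
      ∑' n : ℕ, ‖poch a (n + 1) / poch c (n + 1) / ((n + 1 : ℕ) : ℂ)‖) / N := by
    intro N hN0
    have hN : (0 : ℝ) < N := by exact_mod_cast hN0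
    have hle : (N : ℝ) ≤ ‖c + N‖ := by
      refine le_trans ?_ (Complex.re_le_norm _)
      simp; linarith
    rw [mul_comm, mul_div_assoc, mul_comm]
    refine tsum_of_norm_bounded (hs.hasSum.mul_left (‖c‖ / N)) fun n => ?_
    have n0 : c ≠ 0 := by simpa using re_pos_ne hc 0
    have n1 : 0 < ‖poch c (n + 1)‖ := norm_pos_iff.2 (poch_ne (re_pos_ne hc) _)
    have key : ‖poch c (n + 1)‖ * N ≤ ‖c‖ * ‖poch (c + N) (n + 1)‖ := by
      rw [poch_succ_left, poch_succ_left, norm_mul, norm_mul]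
      have : c + N + 1 = c + 1 + N := by ring
      rw [this]
      have h3 := norm_poch_mono (c := c + 1) (by simp; linarith) N n
      calc ‖c‖ * ‖poch (c + 1) n‖ * N = ‖c‖ * (N * ‖poch (c + 1) n‖) := by ring
        _ ≤ _ := by gcongr
    have n2 : 0 < ‖poch (c + N) (n + 1)‖ :=
      n1.trans_le (norm_poch_mono hc N (n + 1))
    rw [norm_div, norm_div, norm_div, norm_div, ← mul_div_assoc]
    gcongr
    rw [div_mul_div_comm, div_le_div_iff₀ n2 (by positivity)]
    nlinarith [norm_nonneg (poch a (n + 1)), mul_le_mul_of_nonneg_left key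
      (norm_nonneg (poch a (n + 1)))]
  refine squeeze_zero_norm' ?_ (tendsto_const_div_atTop_nhds_zero_nat (‖c‖ *
      ∑' n : ℕ, ‖poch a (n + 1) / poch c (n + 1) / ((n + 1 : ℕ) : ℂ)‖))
  filter_upwards [eventually_gt_atTop 0] with N hN using hb N hN

/-- Uniform bound for the Euler sequence on vertical strips. -/
lemma GammaSeq_bound (p q : ℝ) (hp : 0 < p) (hq : 0 < q) : ∃ M, ∀ (w : ℂ) (n : ℕ), n ≠ 0 →
    p ≤ w.re → w.re ≤ q → ‖Complex.GammaSeq w n‖ ≤ M := by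
  let g : ℝ → ℝ := fun x => Real.exp (-x) * x ^ (p - 1) + Real.exp (-x) * x ^ (q - 1)
  have hg : MeasureTheory.IntegrableOn g (Set.Ioi 0) :=
    (Real.GammaIntegral_convergent hp).add (Real.GammaIntegral_convergent hq)
  refine ⟨∫ x in Set.Ioi 0, g x, fun w n hn h1 h2 => ?_⟩
  have hn' : (0 : ℝ) ≤ n := n.cast_nonneg
  rw [Complex.GammaSeq_eq_approx_Gamma_integral (by linarith) hn]
  have hgi : MeasureTheory.IntegrableOn g (Set.Ioc 0 n) := hg.mono_set Set.Ioc_subset_Ioi_self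
  refine (intervalIntegral.norm_integral_le_of_norm_le hn' (g := g) ?_ ?_).trans ?_
  · filter_upwards with x hx
    have hx0 : 0 < x := hx.1
    have hx1 : 0 ≤ 1 - x / n := sub_nonneg.mpr (div_le_one_of_le₀ hx.2 hn')
    rw [norm_mul, Complex.norm_of_nonneg (pow_nonneg hx1 _),
      Complex.norm_cpow_eq_rpow_re_of_pos hx0]
    have e1 : (1 - x / n) ^ n ≤ Real.exp (-x) := Real.one_sub_div_pow_le_exp_neg hx.2
    have e2 : x ^ (w - 1).re ≤ x ^ (p - 1) + x ^ (q - 1) := by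
      have p1 : 0 ≤ x ^ (p - 1) := by positivity
      have p2 : 0 ≤ x ^ (q - 1) := by positivity
      rcases le_total x 1 with hx' | hx'
      · have : x ^ (w - 1).re ≤ x ^ (p - 1) :=
          Real.rpow_le_rpow_of_exponent_ge hx0 hx' (by simp; linarith)
        linarith
      · have : x ^ (w - 1).re ≤ x ^ (q - 1) :=
          Real.rpow_le_rpow_of_exponent_le hx' (by simp; linarith)
        linarith
    calc _ ≤ Real.exp (-x) * (x ^ (p - 1) + x ^ (q - 1)) := by gcongr
      _ = g x := by simp only [g]; ring
  · exact (intervalIntegrable_iff_integrableOn_Ioc_of_le hn').2 hgi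
  · rw [intervalIntegral.integral_of_le hn']
    refine MeasureTheory.setIntegral_mono_set hg ?_ (Set.Ioc_subset_Ioi_self.eventuallyLE)
    filter_upwards [MeasureTheory.self_mem_ae_restrict measurableSet_Ioi] with x hx
    have hx0 : 0 < x := hx
    simp only [g, Pi.zero_apply]
    positivity

lemma GammaSeq_hasDerivAt {z : ℂ} (hz : 0 < z.re) {n : ℕ} (hn : n ≠ 0) :
    HasDerivAt (fun w => Complex.GammaSeq w n) (Complex.GammaSeq z n *
      (Complex.log n - ∑ j ∈ Finset.range (n + 1), 1 / (z + j))) z := by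
  have hnc : (n : ℂ) ≠ 0 := by exact_mod_cast hn
  have h1 : HasDerivAt (fun w : ℂ => (n : ℂ) ^ w) ((n : ℂ) ^ z * Complex.log n) z := by
    simpa using (hasDerivAt_id z).const_cpow (Or.inl hnc)
  have h2 : ∀ N : ℕ, HasDerivAt (fun w : ℂ => ∏ j ∈ Finset.range N, (w + j))
      ((∏ j ∈ Finset.range N, (z + j)) * ∑ j ∈ Finset.range N, 1 / (z + j)) z := by
    intro N
    induction N with
    | zero => simpa using hasDerivAt_const z (1 : ℂ)
    | succ N ih =>
      simp_rw [Finset.prod_range_succ, Finset.sum_range_succ]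
      refine (ih.mul ((hasDerivAt_id z).add_const (N : ℂ))).congr_deriv ?_
      have := add_nat_ne (re_pos_ne hz) N
      simp only [id]
      field_simp
  have hne : ∏ j ∈ Finset.range (n + 1), (z + j) ≠ 0 :=
    Finset.prod_ne_zero_iff.2 fun j _ => add_nat_ne (re_pos_ne hz) j
  refine ((h1.mul_const (n.factorial : ℂ)).div (h2 (n + 1)) hne).congr_deriv ?_
  rw [Complex.GammaSeq]
  field_simp

lemma deriv_tendsto {z : ℂ} (hz : 0 < z.re) :
    Tendsto (fun n : ℕ => deriv (fun w => Complex.GammaSeq w n) z) atTop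
      (𝓝 (deriv Complex.Gamma z)) := by
  obtain ⟨R, hR⟩ : ∃ R, R = z.re / 2 := ⟨_, rfl⟩
  have hR0 : 0 < R := by linarith
  obtain ⟨M, hM⟩ := GammaSeq_bound R (3 * R) hR0 (by linarith)
  have hre : ∀ w ∈ Metric.closedBall z R, R ≤ w.re ∧ w.re ≤ 3 * R := by
    intro w hw
    have h1 := (Complex.abs_re_le_norm (w - z)).trans (mem_closedBall_iff_norm.1 hw)
    rw [Complex.sub_re, abs_le] at h1
    constructor <;> linarith
  have hcl : closure (Metric.ball z R) ⊆ Metric.closedBall z R := Metric.closure_ball_subset_closedBall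
  have hd1 : DiffContOnCl ℂ Complex.Gamma (Metric.ball z R) := by
    apply DifferentiableOn.diffContOnCl
    intro w hw
    exact (Complex.differentiableAt_Gamma w (re_pos_ne (by
      linarith [(hre w (hcl hw)).1]))).differentiableWithinAt
  have hd2 : ∀ n : ℕ, n ≠ 0 →
      DiffContOnCl ℂ (fun w => Complex.GammaSeq w n) (Metric.ball z R) := by
    intro n hn
    apply DifferentiableOn.diffContOnCl
    intro w hw
    exact (GammaSeq_hasDerivAt (by
      linarith [(hre w (hcl hw)).1]) hn).differentiableAt.differentiableWithinAt
  have hC : ∀ f : ℂ → ℂ, DiffContOnCl ℂ f (Metric.ball z R) →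
      deriv f z = (2 * Real.pi * Complex.I : ℂ)⁻¹ • ∮ w in C(z, R), (1 / (w - z) ^ 2) • f w := by
    intro f hf
    rw [hf.deriv_eq_smul_circleIntegral hR0, inv_smul_smul₀ Complex.two_pi_I_ne_zero]
  rw [hC _ hd1]
  have main : Tendsto (fun n : ℕ => (2 * Real.pi * Complex.I : ℂ)⁻¹ •
      ∮ w in C(z, R), (1 / (w - z) ^ 2) • Complex.GammaSeq w n) atTop
      (𝓝 ((2 * Real.pi * Complex.I : ℂ)⁻¹ •
      ∮ w in C(z, R), (1 / (w - z) ^ 2) • Complex.Gamma w)) := by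
    refine Tendsto.const_smul ?_ _
    unfold circleIntegral
    refine intervalIntegral.tendsto_integral_filter_of_dominated_convergence
      (fun _ => R * ((1 / R ^ 2) * M)) ?_ ?_ ?_ ?_
    · filter_upwards [eventually_ne_atTop 0] with n hn
      apply Continuous.aestronglyMeasurable
      simp only [deriv_circleMap]
      refine ((continuous_circleMap 0 R).mul continuous_const).smul (Continuous.fun_smul ?_ ?_)
      · refine continuous_const.div (((continuous_circleMap z R).sub continuous_const).pow 2) ?_
        intro θ
        exact pow_ne_zero 2 (sub_ne_zero.2 (circleMap_ne_center hR0.ne'))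
      · rw [continuous_iff_continuousAt]
        intro θ
        have hw := circleMap_mem_closedBall z hR0.le θ
        exact (GammaSeq_hasDerivAt (z := circleMap z R θ) (by
          linarith [(hre _ hw).1]) hn).continuousAt.comp
            (f := circleMap z R) (continuous_circleMap z R).continuousAt
    · filter_upwards [eventually_ne_atTop 0] with n hn
      filter_upwards with θ _
      have hw := circleMap_mem_closedBall z hR0.le θ
      have := hM _ n hn (hre _ hw).1 (hre _ hw).2
      rw [norm_smul, norm_smul]
      simp [abs_of_pos hR0]
      gcongr
    · exact intervalIntegrable_const
    · filter_upwards with θ _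
      exact ((Complex.GammaSeq_tendsto_Gamma _).const_smul _).const_smul _
  refine main.congr' ?_
  filter_upwards [eventually_ne_atTop 0] with n hn
  rw [hC _ (hd2 n hn)]

lemma psi_tendsto {z : ℂ} (hz : 0 < z.re) :
    Tendsto (fun n : ℕ => Complex.log n - ∑ j ∈ Finset.range (n + 1), 1 / (z + j)) atTop
      (𝓝 (digamma z)) := by
  have h0 := Complex.Gamma_ne_zero (re_pos_ne hz)
  have := (deriv_tendsto hz).div (Complex.GammaSeq_tendsto_Gamma z) h0
  refine this.congr' ?_
  filter_upwards [eventually_ne_atTop 0,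
    (Complex.GammaSeq_tendsto_Gamma z).eventually_ne h0] with n hn h1
  simp only [Pi.div_apply]
  rw [(GammaSeq_hasDerivAt hz hn).deriv, mul_div_cancel_left₀ _ h1]

lemma D_eq_pos (a c : ℂ) (hc : 0 < c.re) (h : 0 < (c - a).re) :
    DD a c = digamma c - digamma (c - a) := by
  have h1 := (psi_tendsto hc).sub (psi_tendsto h)
  have h2 := ((D_tendsto a c hc h).comp (tendsto_add_atTop_nat 1)).add h1
  rw [zero_add] at h2
  refine tendsto_nhds_unique (tendsto_const_nhds.congr fun n => ?_) h2
  rw [D_iter a c hc h (n + 1), Finset.sum_sub_distrib]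
  simp only [Function.comp]
  ring

lemma digamma_succ (c : ℂ) (hc : ∀ n : ℕ, c ≠ -(n : ℂ)) :
    digamma (c + 1) = digamma c + 1 / c := by
  have := Complex.digamma_apply_add_one c hc
  rw [one_div]
  exact this

lemma D_eq (a c : ℂ) (hc : ∀ n : ℕ, c ≠ -(n : ℂ)) (h : 0 < (c - a).re) :
    DD a c = digamma c - digamma (c - a) := by
  obtain ⟨N, hN⟩ := exists_nat_gt (-c.re)
  induction N generalizing c with
  | zero => exact D_eq_pos a c (by simpa using hN) h
  | succ N ih =>
    have := ih (c + 1) (succ_ne hc) (by simp at h ⊢; linarith) (by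
      push_cast at hN; simp; linarith)
    rw [D_step a c hc h, this, digamma_succ c hc, add_sub_right_comm c,
      digamma_succ (c - a) (re_pos_ne h)]
    ring

theorem entry9_extension_single
    (m : ℕ) (hm : 0 < m)
    (a c d : ℂ)
    (hre : (c - a).re > (m : ℝ))
    (hc : ∀ n : ℕ, c ≠ -(n : ℂ))
    (hca : ∀ n : ℕ, c - a ≠ -(n : ℂ))
    (hd : ∀ n : ℕ, d ≠ -(n : ℂ))
    (hac : ∀ k, 1 ≤ k → k ≤ m → poch (1 + a - c) k ≠ 0) :
    ∑' k : ℕ, poch a (k + 1) * poch (d + (m : ℂ)) (k + 1) /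
        (poch c (k + 1) * poch d (k + 1) * ((k + 1 : ℕ) : ℂ))
      = digamma c - digamma (c - a) +
        (Nat.factorial m : ℂ) *
          ∑ k ∈ Finset.Icc 1 m,
            (-1 : ℂ) ^ k * poch a k /
              ((k : ℂ) * (Nat.factorial (m - k) : ℂ) * poch (1 + a - c) k * poch d k) := by
  have hm0 : (0 : ℝ) < m := by exact_mod_cast hm
  have hpos : 0 < (c - a).re := by linarith
  have hj : ∀ j ∈ Finset.range m, (c - a).re > j + 1 := by
    intro j hj
    have : ((j + 1 : ℕ) : ℝ) ≤ m := by
      exact_mod_cast Finset.mem_range.1 hj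
    push_cast at this
    linarith
  have hs : ∀ j ∈ Finset.range m, Summable fun n : ℕ => (m.choose (j + 1) : ℂ) / poch d (j + 1) *
      (poch a (n + 1) / poch c (n + 1) * (n.descFactorial j : ℂ)) :=
    fun j h => (u_summable a c j (hj j h)).mul_left _
  have hterm : ∀ n : ℕ, poch a (n + 1) * poch (d + (m : ℂ)) (n + 1) /
        (poch c (n + 1) * poch d (n + 1) * ((n + 1 : ℕ) : ℂ))
      = poch a (n + 1) / poch c (n + 1) / ((n + 1 : ℕ) : ℂ) +
        ∑ j ∈ Finset.range m, (m.choose (j + 1) : ℂ) / poch d (j + 1) *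
      (poch a (n + 1) / poch c (n + 1) * (n.descFactorial j : ℂ)) := by
    intro n
    have m3 : ((n + 1 : ℕ) : ℂ) ≠ 0 := by exact_mod_cast n.succ_ne_zero
    have e : poch a (n + 1) * poch (d + (m : ℂ)) (n + 1) /
        (poch c (n + 1) * poch d (n + 1) * ((n + 1 : ℕ) : ℂ))
        = poch a (n + 1) / poch c (n + 1) / ((n + 1 : ℕ) : ℂ) *
          (poch (d + (m : ℂ)) (n + 1) / poch d (n + 1)) := by
      rw [div_div, div_mul_div_comm]; congr 1; ring
    rw [e, vander (n + 1) m d hd, Finset.sum_range_succ', mul_add, add_comm, Finset.mul_sum]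
    congr 1
    · simp [poch_zero]
    · refine Finset.sum_congr rfl fun j _ => ?_
      rw [Nat.succ_descFactorial_succ, Nat.cast_mul]
      field_simp
  rw [tsum_congr hterm, (D_summable a c hpos).tsum_add (summable_sum hs),
    Summable.tsum_finsetSum hs]
  congr 1
  · exact D_eq a c hc hpos
  · rw [Finset.mul_sum, Finset.range_eq_Ico, ← Finset.Ico_succ_right_eq_Icc 1 m]
    have := Finset.sum_Ico_add' (fun k : ℕ => (m.factorial : ℂ) * ((-1 : ℂ) ^ k * poch a k /
              ((k : ℂ) * (Nat.factorial (m - k) : ℂ) * poch (1 + a - c) k * poch d k))) 0 m 1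
    rw [zero_add] at this
    rw [Order.succ_eq_add_one, ← this, ← Finset.range_eq_Ico]
    refine Finset.sum_congr rfl fun j hjm => ?_
    rw [tsum_mul_left, S_eval a c hc j (hj j hjm)]
    have hle : j + 1 ≤ m := Finset.mem_range.1 hjm
    have hch := Nat.choose_mul_factorial_mul_factorial hle
    have hch' : (m.factorial : ℂ) = m.choose (j + 1) * ((j + 1 : ℕ) * j.factorial)
        * (m - (j + 1)).factorial := by
      rw [← hch, Nat.factorial_succ]; push_cast; ring
    have n1 := hac (j + 1) (by omega) hle
    have n2 := poch_ne hd (j + 1)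
    have n3 : ((m - (j + 1)).factorial : ℂ) ≠ 0 := by exact_mod_cast Nat.factorial_ne_zero _
    have n4 : ((j + 1 : ℕ) : ℂ) ≠ 0 := by exact_mod_cast j.succ_ne_zero
    rw [hch']
    field_simp
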